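/- arXiv:0801.0054 — 2 statements merged into one kernel-verified Lean document; each statement's English description precedes it below -/
import Mathlib

section
/- Let A = (1/(2·log 2)) · Σ_{k=0}^∞ m_k (log 2)^k / k! (this series converges absolutely since 0 ≤ m_k ≤ 1). Then there is a constant C > 0 such that for every L ≥ 0, |M_L − A · (log 2)^(−L) · L!| ≤ C · 6.3^(−L) · L!. In particular M_L ~ A · (log 2)^(−L) · L! as L → ∞. -/
open Filter

/-- The generations of the Calkin–Wilf tree: `CW 0 = [1/1]` is the first
generation, and each generation is obtained from the previous one by replacing
each entry `x` by `x/(x+1)` and `x+1`, in this order.  Thus the `n`-th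
generation of the paper is `CW (n-1)`. -/
def CW : ℕ → List ℚ
  | 0 => [1]
  | n + 1 => (CW n).flatMap (fun x => [x / (x + 1), x + 1])

open scoped Classical in
/-- `Fcw n` is the distribution function of the `(n+1)`-st generation of the
Calkin–Wilf tree: `Fcw (n-1) x = F_n(x) = 2^(1-n) · #{j : x_j^(n) ≤ x}`. -/
noncomputable def Fcw (n : ℕ) (x : ℝ) : ℝ :=
  ((CW n).countP (fun q => decide ((q : ℝ) ≤ x))) / 2 ^ n

open MeasureTheory Real

/-!
`μ` is stationary under passing to a random child `x / (x + 1)` or `x + 1`, so that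
`M z * (2 - exp z) = m z`, where `M` and `m` are the exponential generating functions of the moments
`∫ x ^ k ∂μ` and `∫ (x / (x + 1)) ^ k ∂μ`. The support of the latter distribution is bounded, hence
`m` is entire and `M` continues meromorphically with poles only at `log 2 + 2 * π * I * k`. The pole
at `log 2` is simple and contributes the main term; without it `M` is analytic on
`‖z‖ < ‖log 2 + 2 * π * I‖ ≈ 6.321`, and Cauchy's estimates bound the rest.
-/

open ProbabilityTheory Set Topology
open scoped NNReal

lemma CW_pos {n : ℕ} {q : ℚ} (hq : q ∈ CW n) : 0 < q := by
  induction n generalizing q with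
  | zero => simp_all [CW]
  | succ n ih =>
    simp only [CW, List.mem_flatMap, List.mem_cons, List.not_mem_nil, or_false] at hq
    obtain ⟨x, hx, rfl | rfl⟩ := hq <;> have := ih hx <;> positivity

lemma length_CW (n : ℕ) : (CW n).length = 2 ^ n := by
  induction n with
  | zero => simp [CW]
  | succ n ih => simp [CW, List.length_flatMap, ih, pow_succ]

lemma countP_CW_succ (n : ℕ) (p : ℚ → Bool) :
    (CW (n + 1)).countP p =
      (CW n).countP (fun q ↦ p (q / (q + 1))) + (CW n).countP (fun q ↦ p (q + 1)) := by
  rw [CW]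
  induction CW n with
  | nil => simp
  | cons a l ih =>
    simp only [List.flatMap_cons, List.countP_append, ih, List.countP_cons, List.countP_nil]
    omega

open scoped Classical in
-- `Fcw` unfolds to a count over the monadic coercion of `CW n` to `List ℝ`.
lemma Fcw_eq_countP (n : ℕ) (x : ℝ) :
    Fcw n x = (CW n).countP (fun q : ℚ ↦ decide ((q : ℝ) ≤ x)) / 2 ^ n := by
  have coe_eq_map : (do let q ← CW n; pure (q : ℝ) : List ℝ) =
      (CW n).map (fun q : ℚ ↦ (q : ℝ)) := by
    simp [← List.map_eq_flatMap]
  rw [Fcw, coe_eq_map, List.countP_map]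
  rfl

lemma Fcw_of_nonpos (n : ℕ) {x : ℝ} (hx : x ≤ 0) : Fcw n x = 0 := by
  have count_eq_zero : (CW n).countP (fun q : ℚ ↦ decide ((q : ℝ) ≤ x)) = 0 := by
    refine List.countP_eq_zero.2 fun q hq ↦ ?_
    have hq_pos : (0 : ℝ) < q := mod_cast CW_pos hq
    simpa using hx.trans_lt hq_pos
  simp [Fcw_eq_countP, count_eq_zero]

lemma Fcw_succ_of_one_le (n : ℕ) {x : ℝ} (hx : 1 ≤ x) :
    Fcw (n + 1) x = (1 + Fcw n (x - 1)) / 2 := by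
  have count_left : (CW n).countP (fun q ↦ decide (((q / (q + 1) : ℚ) : ℝ) ≤ x)) = 2 ^ n := by
    rw [← length_CW n, List.countP_eq_length]
    intro q hq
    have hq_pos := CW_pos hq
    have hle : q / (q + 1) ≤ 1 := (div_le_one (by positivity)).2 (by linarith)
    exact decide_eq_true (le_trans (mod_cast hle) hx)
  have count_right : (CW n).countP (fun q ↦ decide (((q + 1 : ℚ) : ℝ) ≤ x)) =
      (CW n).countP (fun q : ℚ ↦ decide ((q : ℝ) ≤ x - 1)) := by
    simp [le_sub_iff_add_le]
  rw [Fcw_eq_countP, Fcw_eq_countP, countP_CW_succ, count_left, count_right]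
  push_cast
  field

lemma div_add_one_le_iff {x b : ℝ} (hx : 0 < x) (hb : b < 1) :
    x / (x + 1) ≤ b ↔ x ≤ b / (1 - b) := by
  rw [div_le_iff₀ (by positivity), le_div_iff₀ (by linarith)]
  constructor <;> intro h <;> linarith

lemma Fcw_succ_of_lt_one (n : ℕ) {x : ℝ} (hx : x < 1) :
    Fcw (n + 1) x = Fcw n (x / (1 - x)) / 2 := by
  have count_left : (CW n).countP (fun q ↦ decide (((q / (q + 1) : ℚ) : ℝ) ≤ x)) =
      (CW n).countP (fun q : ℚ ↦ decide ((q : ℝ) ≤ x / (1 - x))) := by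
    refine List.countP_congr fun q hq ↦ ?_
    have hq_pos : (0 : ℝ) < q := mod_cast CW_pos hq
    simpa using div_add_one_le_iff hq_pos hx
  have count_right : (CW n).countP (fun q ↦ decide (((q + 1 : ℚ) : ℝ) ≤ x)) = 0 := by
    refine List.countP_eq_zero.2 fun q hq ↦ ?_
    have hq_pos : (0 : ℝ) < q := mod_cast CW_pos hq
    simp only [Rat.cast_add, Rat.cast_one, decide_eq_true_eq]
    linarith
  rw [Fcw_eq_countP, Fcw_eq_countP, countP_CW_succ, count_left, count_right]
  push_cast
  field

/-- The generations of the Calkin–Wilf tree, each with the uniform distribution on its entries,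
converge in law to `μ`, in the sense of pointwise convergence of the distribution functions. -/
def IsCWLimitLaw (μ : Measure ℝ) : Prop :=
  ∀ x : ℝ, Tendsto (fun n ↦ Fcw n x) atTop (𝓝 (μ.real (Iic x)))

/-- A measure on the positive reals is stationary for the Calkin–Wilf tree if passing to a uniformly
chosen child `x / (x + 1)` or `x + 1` of a `μ`-distributed `x` preserves `μ`. The identity is
doubled to clear the probability `1 / 2` of each child. -/
structure IsCWStationary (μ : Measure ℝ) : Prop where
  ae_pos : ∀ᵐ x ∂μ, 0 < x
  two_smul_eq : (2 : ℝ≥0) • μ = μ.map (fun x ↦ x / (x + 1)) + μ.map (fun x ↦ x + 1)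

lemma F_natCast_of_tendsto_Fcw {F : ℝ → ℝ}
    (hF : ∀ x : ℝ, 0 ≤ x → Tendsto (fun n ↦ Fcw n x) atTop (𝓝 (F x))) (k : ℕ) :
    F k = 1 - (1 / 2) ^ k := by
  induction k with
  | zero =>
    have h := hF 0 le_rfl
    simp only [Fcw_of_nonpos _ le_rfl] at h
    simpa using tendsto_nhds_unique h tendsto_const_nhds
  | succ k ih =>
    have hstep : Tendsto (fun n ↦ Fcw (n + 1) (k + 1)) atTop (𝓝 ((1 + F k) / 2)) := by
      simpa [Fcw_succ_of_one_le] using ((hF k (by positivity)).const_add 1).div_const 2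
    have hlim := (tendsto_add_atTop_iff_nat 1).2 (hF (k + 1) (by positivity))
    rw [Nat.cast_succ, tendsto_nhds_unique hlim hstep, ih]
    ring

lemma isCWLimitLaw_of_measure_Ioc {F : ℝ → ℝ}
    (hF : ∀ x : ℝ, 0 ≤ x → Tendsto (fun n ↦ Fcw n x) atTop (𝓝 (F x)))
    {μ : Measure ℝ} [IsProbabilityMeasure μ]
    (hμ : ∀ a b : ℝ, a ≤ b → μ (Ioc a b) = ENNReal.ofReal (F b - F a)) : IsCWLimitLaw μ := by
  have F_natCast := F_natCast_of_tendsto_Fcw hF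
  have F_zero : F 0 = 0 := by simpa using F_natCast 0
  have F_nonneg {x : ℝ} (hx : 0 ≤ x) : 0 ≤ F x :=
    ge_of_tendsto' (hF x hx) fun n ↦ by rw [Fcw_eq_countP]; positivity
  have Iic_eq_add {x : ℝ} (hx : 0 ≤ x) : μ.real (Iic x) = μ.real (Iic 0) + F x := by
    rw [← Iic_union_Ioc_eq_Iic hx, measureReal_union (Iic_disjoint_Ioc le_rfl) measurableSet_Ioc,
      measureReal_def μ (Ioc 0 x), hμ 0 x hx, F_zero, sub_zero, ENNReal.toReal_ofReal (F_nonneg hx)]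
  -- `F` already increases to `1` along the integers, which leaves no mass for `Iic 0`.
  have Iic_zero : μ.real (Iic 0) = 0 := by
    refine le_antisymm (ge_of_tendsto' (tendsto_pow_atTop_nhds_zero_of_lt_one (r := (1 / 2 : ℝ))
      (by norm_num) (by norm_num)) fun k ↦ ?_) measureReal_nonneg
    have hle : μ.real (Iic (k : ℝ)) ≤ 1 := measureReal_le_one
    rw [Iic_eq_add k.cast_nonneg, F_natCast] at hle
    linarith
  intro x
  rcases le_total 0 x with hx | hx
  · simpa [Iic_eq_add hx, Iic_zero] using hF x hx
  · have Iic_x : μ.real (Iic x) = 0 := measureReal_mono_null (Iic_subset_Iic.2 hx) Iic_zero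
    simp [Fcw_of_nonpos _ hx, Iic_x]

namespace IsCWLimitLaw

variable {μ : Measure ℝ}

lemma measureReal_Iic_of_nonpos (hμ : IsCWLimitLaw μ) {x : ℝ} (hx : x ≤ 0) :
    μ.real (Iic x) = 0 := by
  have hlim := hμ x
  simp only [Fcw_of_nonpos _ hx] at hlim
  exact tendsto_nhds_unique hlim tendsto_const_nhds

lemma two_mul_measureReal_Iic_of_one_le (hμ : IsCWLimitLaw μ) {x : ℝ} (hx : 1 ≤ x) :
    2 * μ.real (Iic x) = 1 + μ.real (Iic (x - 1)) := by
  have hlim := (tendsto_add_atTop_iff_nat 1).2 (hμ x)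
  simp only [Fcw_succ_of_one_le _ hx] at hlim
  linarith [tendsto_nhds_unique hlim (((hμ (x - 1)).const_add 1).div_const 2)]

lemma two_mul_measureReal_Iic_of_lt_one (hμ : IsCWLimitLaw μ) {x : ℝ} (hx : x < 1) :
    2 * μ.real (Iic x) = μ.real (Iic (x / (1 - x))) := by
  have hlim := (tendsto_add_atTop_iff_nat 1).2 (hμ x)
  simp only [Fcw_succ_of_lt_one _ hx] at hlim
  linarith [tendsto_nhds_unique hlim ((hμ (x / (1 - x))).div_const 2)]

lemma ae_pos [IsFiniteMeasure μ] (hμ : IsCWLimitLaw μ) : ∀ᵐ x ∂μ, 0 < x := by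
  have Iic_zero : μ (Iic 0) = 0 := (measureReal_eq_zero_iff).1 (hμ.measureReal_Iic_of_nonpos le_rfl)
  filter_upwards [measure_eq_zero_iff_ae_notMem.1 Iic_zero] with x hx using not_le.1 hx

lemma isCWStationary [IsProbabilityMeasure μ] (hμ : IsCWLimitLaw μ) : IsCWStationary μ := by
  refine ⟨hμ.ae_pos, Measure.ext_of_Iic _ _ fun b ↦ ?_⟩
  rw [← measureReal_eq_measureReal_iff, measureReal_nnreal_smul_apply, measureReal_add_apply,
    map_measureReal_apply (by fun_prop) measurableSet_Iic,
    map_measureReal_apply (by fun_prop) measurableSet_Iic]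
  have right_preimage : (fun x : ℝ ↦ x + 1) ⁻¹' Iic b = Iic (b - 1) := by
    ext x; simp [le_sub_iff_add_le]
  rw [right_preimage, NNReal.coe_ofNat]
  rcases lt_or_ge b 1 with hb | hb
  · have left_preimage : (fun x : ℝ ↦ x / (x + 1)) ⁻¹' Iic b =ᵐ[μ] Iic (b / (1 - b)) := by
      filter_upwards [hμ.ae_pos] with x hx using propext (div_add_one_le_iff hx hb)
    rw [measureReal_congr left_preimage, hμ.two_mul_measureReal_Iic_of_lt_one hb,
      hμ.measureReal_Iic_of_nonpos (by linarith : b - 1 ≤ 0), add_zero]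
  · have left_preimage : (fun x : ℝ ↦ x / (x + 1)) ⁻¹' Iic b =ᵐ[μ] univ := by
      filter_upwards [hμ.ae_pos] with x hx
      exact eq_true (((div_le_one (by positivity)).2 (by linarith)).trans hb : x / (x + 1) ≤ b)
    rw [measureReal_congr left_preimage, probReal_univ, hμ.two_mul_measureReal_Iic_of_one_le hb]

end IsCWLimitLaw

section MomentGeneratingFunction

variable {Ω : Type*} [MeasurableSpace Ω] {X : Ω → ℝ} {μ : Measure Ω}

lemma ofReal_exp_mul_le_one_add_tsum {t : ℝ} (ht : 0 ≤ t) (x : ℝ) :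
    ENNReal.ofReal (exp (t * x)) ≤
      1 + ∑' n : ℕ, (Ioi (n : ℝ)).indicator (fun _ ↦ ENNReal.ofReal (exp (t * (n + 1)))) x := by
  rcases le_or_gt x 0 with hx | hx
  · refine le_add_right (ENNReal.ofReal_le_one.2 (exp_le_one_iff.2 ?_))
    exact mul_nonpos_of_nonneg_of_nonpos ht hx
  · obtain ⟨n, hn⟩ := Nat.exists_eq_succ_of_ne_zero (Nat.ceil_pos.2 hx).ne'
    have lt_x : (n : ℝ) < x := Nat.lt_ceil.1 (hn ▸ n.lt_succ_self)
    have x_le : x ≤ n + 1 := by simpa [hn] using Nat.le_ceil x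
    refine le_add_left (le_trans ?_ (ENNReal.le_tsum n))
    rw [indicator_of_mem (mem_Ioi.2 lt_x)]
    gcongr

lemma integrable_exp_mul_of_measure_gt_natCast_le [IsFiniteMeasure μ] (hX : AEMeasurable X μ)
    {C r t : ℝ} (hr : 0 ≤ r) (htail : ∀ n : ℕ, μ.real {ω | n < X ω} ≤ C * r ^ n) (ht : 0 ≤ t)
    (htr : exp t * r < 1) : Integrable (fun ω ↦ exp (t * X ω)) μ := by
  have hC : 0 ≤ C := by simpa using measureReal_nonneg.trans (htail 0)
  have term_le (n : ℕ) : ENNReal.ofReal (exp (t * (n + 1))) * μ.map X (Ioi (n : ℝ)) ≤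
      ENNReal.ofReal (exp t * C * (exp t * r) ^ n) := by
    have exp_succ : exp (t * (n + 1)) = exp t * exp t ^ n := by
      rw [← exp_nat_mul, ← exp_add]; ring_nf
    have map_le : μ.map X (Ioi (n : ℝ)) ≤ ENNReal.ofReal (C * r ^ n) := by
      rw [Measure.map_apply_of_aemeasurable hX measurableSet_Ioi, ← ofReal_measureReal]
      exact ENNReal.ofReal_le_ofReal (htail n)
    refine (mul_le_mul_right map_le _).trans_eq ?_
    rw [← ENNReal.ofReal_mul (exp_pos _).le, exp_succ, mul_pow]
    ring_nf
  have summable_bound : Summable fun n : ℕ ↦ exp t * C * (exp t * r) ^ n :=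
    (summable_geometric_of_lt_one (by positivity) htr).mul_left _
  refine ⟨by fun_prop, ?_⟩
  rw [hasFiniteIntegral_iff_ofReal (ae_of_all _ fun ω ↦ (exp_pos _).le)]
  calc ∫⁻ ω, ENNReal.ofReal (exp (t * X ω)) ∂μ
    _ = ∫⁻ x, ENNReal.ofReal (exp (t * x)) ∂μ.map X :=
      (lintegral_map' (f := fun x ↦ ENNReal.ofReal (exp (t * x))) (by fun_prop) hX).symm
    _ ≤ ∫⁻ x, (1 + ∑' n : ℕ, (Ioi (n : ℝ)).indicator
          (fun _ ↦ ENNReal.ofReal (exp (t * (n + 1)))) x) ∂μ.map X :=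
      lintegral_mono (ofReal_exp_mul_le_one_add_tsum ht)
    _ = μ.map X univ + ∑' n : ℕ, ENNReal.ofReal (exp (t * (n + 1))) * μ.map X (Ioi (n : ℝ)) := by
      rw [lintegral_add_left measurable_const, lintegral_one,
        lintegral_tsum fun n ↦ (measurable_const.indicator measurableSet_Ioi).aemeasurable]
      simp only [lintegral_indicator_const measurableSet_Ioi]
    _ ≤ μ.map X univ + ENNReal.ofReal (∑' n : ℕ, exp t * C * (exp t * r) ^ n) := by
      rw [ENNReal.ofReal_tsum_of_nonneg (fun n ↦ by positivity) summable_bound]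
      exact add_le_add_right (ENNReal.tsum_le_tsum term_le) _
    _ < ⊤ := ENNReal.add_lt_top.2 ⟨measure_lt_top _ _, ENNReal.ofReal_lt_top⟩

lemma iteratedDeriv_complexMGF_zero (h : 0 ∈ interior (integrableExpSet X μ)) (n : ℕ) :
    iteratedDeriv n (complexMGF X μ) 0 = (∫ ω, X ω ^ n ∂μ : ℝ) := by
  rw [iteratedDeriv_complexMGF (by simpa using h), ← integral_complex_ofReal]
  simp

lemma differentiable_complexMGF (h : integrableExpSet X μ = univ) :
    Differentiable ℂ (complexMGF X μ) := fun _ ↦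
  (hasDerivAt_complexMGF (by simp [h])).differentiableAt

lemma hasSum_mgf (h : integrableExpSet X μ = univ) (t : ℝ) :
    HasSum (fun k : ℕ ↦ (∫ ω, X ω ^ k ∂μ) * t ^ k / (k.factorial : ℝ)) (mgf X μ t) := by
  rw [← Complex.hasSum_ofReal, ← complexMGF_ofReal]
  refine (Complex.hasSum_taylorSeries_of_entire (differentiable_complexMGF h) 0 (t : ℂ)).congr_fun
    fun k ↦ ?_
  rw [iteratedDeriv_complexMGF_zero (by simp [h])]
  simp only [sub_zero, smul_eq_mul]
  push_cast
  ring

lemma complexMGF_add_const (a : ℝ) (z : ℂ) :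
    complexMGF (fun ω ↦ X ω + a) μ z = complexMGF X μ z * Complex.exp (z * a) := by
  simp [complexMGF, mul_add, Complex.exp_add, integral_mul_const]

end MomentGeneratingFunction

namespace IsCWStationary

variable {μ : Measure ℝ}

lemma two_mul_measureReal_Ioi_add_one [IsFiniteMeasure μ] (hμ : IsCWStationary μ) {x : ℝ}
    (hx : 0 ≤ x) : 2 * μ.real (Ioi (x + 1)) = μ.real (Ioi x) := by
  have hstat := congrArg (fun ν : Measure ℝ ↦ ν.real (Ioi (x + 1))) hμ.two_smul_eq
  have left_preimage : (fun y : ℝ ↦ y / (y + 1)) ⁻¹' Ioi (x + 1) =ᵐ[μ] (∅ : Set ℝ) := by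
    filter_upwards [hμ.ae_pos] with y hy
    have hle : y / (y + 1) ≤ 1 := (div_le_one (by positivity)).2 (by linarith)
    exact eq_false (not_lt.2 (by linarith) : ¬x + 1 < y / (y + 1))
  have right_preimage : (fun y : ℝ ↦ y + 1) ⁻¹' Ioi (x + 1) = Ioi x := by ext y; simp
  simpa [measureReal_add_apply, measureReal_nnreal_smul_apply,
    map_measureReal_apply (by fun_prop : Measurable fun y : ℝ ↦ y / (y + 1)) measurableSet_Ioi,
    map_measureReal_apply (by fun_prop : Measurable fun y : ℝ ↦ y + 1) measurableSet_Ioi,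
    measureReal_congr left_preimage, right_preimage] using hstat

lemma measureReal_Ioi_natCast [IsFiniteMeasure μ] (hμ : IsCWStationary μ) (n : ℕ) :
    μ.real (Ioi (n : ℝ)) = μ.real (Ioi 0) * (1 / 2) ^ n := by
  induction n with
  | zero => simp
  | succ n ih =>
    have hstep := hμ.two_mul_measureReal_Ioi_add_one n.cast_nonneg
    rw [Nat.cast_succ, pow_succ]
    linarith

lemma integrable_exp_mul [IsFiniteMeasure μ] (hμ : IsCWStationary μ) {t : ℝ} (ht : t < log 2) :
    Integrable (fun x ↦ exp (t * x)) μ := by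
  rcases le_total t 0 with ht0 | ht0
  · refine Integrable.of_mem_Icc 0 1 (by fun_prop) ?_
    filter_upwards [hμ.ae_pos] with x hx
    exact ⟨(exp_pos _).le, exp_le_one_iff.2 (mul_nonpos_of_nonpos_of_nonneg ht0 hx.le)⟩
  · have hexp : exp t < 2 := (lt_log_iff_exp_lt two_pos).1 ht
    exact integrable_exp_mul_of_measure_gt_natCast_le (X := fun x ↦ x) aemeasurable_id (by norm_num)
      (fun n ↦ (hμ.measureReal_Ioi_natCast n).le) ht0 (by linarith)

lemma zero_mem_interior_integrableExpSet [IsFiniteMeasure μ] (hμ : IsCWStationary μ) :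
    0 ∈ interior (integrableExpSet id μ) :=
  interior_maximal (fun _ ↦ hμ.integrable_exp_mul) isOpen_Iio (mem_Iio.2 (log_pos one_lt_two))

lemma integrableExpSet_div_add_one [IsFiniteMeasure μ] (hμ : IsCWStationary μ) :
    integrableExpSet (fun x ↦ x / (x + 1)) μ = univ := by
  refine eq_univ_of_forall fun t ↦ integrable_exp_mul_of_mem_Icc (a := 0) (b := 1) (by fun_prop) ?_
  filter_upwards [hμ.ae_pos] with x hx
  exact ⟨by positivity, (div_le_one (by positivity)).2 (by linarith)⟩

lemma complexMGF_mul_two_sub_exp [IsFiniteMeasure μ] (hμ : IsCWStationary μ) {z : ℂ}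
    (hz : z.re < log 2) :
    complexMGF id μ z * (2 - Complex.exp z) = complexMGF (fun x ↦ x / (x + 1)) μ z := by
  have hleft : Integrable (fun x : ℝ ↦ Complex.exp (z * x)) (μ.map fun x ↦ x / (x + 1)) := by
    rw [integrable_map_measure (by fun_prop) (by fun_prop)]
    exact integrable_cexp_mul_of_re_mem_integrableExpSet (by fun_prop)
      (hμ.integrableExpSet_div_add_one ▸ mem_univ _)
  have hright : Integrable (fun x : ℝ ↦ Complex.exp (z * x)) (μ.map fun x ↦ x + 1) := by
    rw [integrable_map_measure (by fun_prop) (by fun_prop)]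
    have hid : Integrable (fun x : ℝ ↦ Complex.exp (z * x)) μ :=
      integrable_cexp_mul_of_re_mem_integrableExpSet aemeasurable_id (hμ.integrable_exp_mul hz)
    simpa [Function.comp_def, mul_add, Complex.exp_add] using hid.mul_const (Complex.exp z)
  have hstat : 2 * complexMGF id μ z =
      complexMGF (fun x ↦ x / (x + 1)) μ z + complexMGF id μ z * Complex.exp z := by
    calc 2 * complexMGF id μ z
      _ = complexMGF id ((2 : ℝ≥0) • μ) z := by
        simp [complexMGF, integral_smul_nnreal_measure, NNReal.smul_def]
      _ = complexMGF id (μ.map fun x ↦ x / (x + 1)) z + complexMGF id (μ.map fun x ↦ x + 1) z := by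
        rw [hμ.two_smul_eq]
        exact integral_add_measure hleft hright
      _ = complexMGF (fun x ↦ x / (x + 1)) μ z + complexMGF id μ z * Complex.exp z := by
        rw [complexMGF_id_map (by fun_prop), complexMGF_id_map (by fun_prop)]
        simpa using complexMGF_add_const (X := id) 1 z
  linear_combination hstat

end IsCWStationary

section SimplePole

open Metric

lemma analyticAt_dslope {f : ℂ → ℂ} {c z : ℂ} (hf : AnalyticAt ℂ f z) :
    AnalyticAt ℂ (dslope f c) z := by
  rcases eq_or_ne z c with rfl | hzc
  · obtain ⟨p, hp⟩ := hf
    exact hp.has_fpower_series_dslope_fslope.analyticAt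
  · refine AnalyticAt.congr ?_ (dslope_eventuallyEq_slope_of_ne f hzc).symm
    exact ((analyticAt_id.sub analyticAt_const).inv (sub_ne_zero.2 hzc)).smul
      (hf.sub analyticAt_const)

lemma iteratedDeriv_inv_sub_const_zero (c : ℂ) (L : ℕ) :
    iteratedDeriv L (fun z ↦ (z - c)⁻¹) 0 = -(L.factorial / c ^ (L + 1)) := by
  have h := congrFun (iter_deriv_inv_linear_sub L 1 c) 0
  simp only [one_mul, one_pow, mul_one, zero_sub] at h
  rw [iteratedDeriv_eq_iterate, h, show (-1 - L : ℤ) = -((L + 1 : ℕ) : ℤ) by push_cast; ring,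
    zpow_neg, zpow_natCast, neg_pow c, pow_succ (-1 : ℂ), mul_inv, mul_inv]
  have sign_sq : ((-1 : ℂ) ^ L) * ((-1) ^ L)⁻¹ = 1 := mul_inv_cancel₀ (by simp)
  linear_combination (-(L.factorial : ℂ) * (c ^ (L + 1))⁻¹) * sign_sq

lemma exists_norm_iteratedDeriv_le_of_analyticOnNhd {f : ℂ → ℂ} {R : ℝ} (hR : 0 < R)
    (hf : AnalyticOnNhd ℂ f (closedBall 0 R)) :
    ∃ C : ℝ, 0 < C ∧ ∀ L : ℕ, ‖iteratedDeriv L f 0‖ ≤ L.factorial * C / R ^ L := by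
  obtain ⟨C, hC⟩ := (isCompact_sphere 0 R).exists_bound_of_continuousOn
    (hf.continuousOn.mono sphere_subset_closedBall)
  refine ⟨max C 1, by positivity, fun L ↦ ?_⟩
  exact Complex.norm_iteratedDeriv_le_of_forall_mem_sphere_norm_le L hR
    (hf.differentiableOn.mono closure_ball_subset_closedBall).diffContOnCl
    fun z hz ↦ (hC z hz).trans (le_max_left _ _)

lemma exists_norm_iteratedDeriv_div_sub_add_le {K : ℂ → ℂ} {c : ℂ} {R : ℝ} (hR : 0 < R) (hc : c ≠ 0)
    (hK : AnalyticOnNhd ℂ K (closedBall 0 R)) :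
    ∃ C : ℝ, 0 < C ∧ ∀ L : ℕ,
      ‖iteratedDeriv L (fun z ↦ K z / (z - c)) 0 + K c * (L.factorial / c ^ (L + 1))‖ ≤
        L.factorial * C / R ^ L := by
  have dslope_analytic : AnalyticOnNhd ℂ (dslope K c) (closedBall 0 R) :=
    fun z hz ↦ analyticAt_dslope (hK z hz)
  have zero_mem : (0 : ℂ) ∈ closedBall 0 R := mem_closedBall_self hR.le
  have pole_analytic : AnalyticAt ℂ (fun z ↦ K c * (z - c)⁻¹) 0 :=
    analyticAt_const.mul ((analyticAt_id.sub analyticAt_const).inv (by simpa using hc))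
  have polar_decomposition :
      (fun z ↦ K z / (z - c)) =ᶠ[𝓝 0] dslope K c + fun z ↦ K c * (z - c)⁻¹ := by
    filter_upwards [isOpen_ne.mem_nhds hc.symm] with z hz
    rw [Pi.add_apply, dslope_of_ne K hz, slope_def_field]
    ring
  obtain ⟨C, hC, hbound⟩ := exists_norm_iteratedDeriv_le_of_analyticOnNhd hR dslope_analytic
  refine ⟨C, hC, fun L ↦ ?_⟩
  rw [polar_decomposition.iteratedDeriv_eq, iteratedDeriv_add
    (dslope_analytic 0 zero_mem).contDiffAt pole_analytic.contDiffAt, iteratedDeriv_const_mul_field,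
    iteratedDeriv_inv_sub_const_zero, mul_neg, neg_add_cancel_right]
  exact hbound L

lemma exists_norm_iteratedDeriv_div_add_le_of_simple_zero {m g : ℂ → ℂ} {c : ℂ} {R : ℝ} (hR : 0 < R)
    (hc : c ≠ 0) (hm : AnalyticOnNhd ℂ m (closedBall 0 R)) (hg : AnalyticOnNhd ℂ g (closedBall 0 R))
    (hgc : g c = 0) (hg' : deriv g c ≠ 0) (hzero : ∀ z ∈ closedBall 0 R, g z = 0 → z = c) :
    ∃ C : ℝ, 0 < C ∧ ∀ L : ℕ,
      ‖iteratedDeriv L (fun z ↦ m z / g z) 0 + m c / deriv g c * (L.factorial / c ^ (L + 1))‖ ≤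
        L.factorial * C / R ^ L := by
  have factor (z : ℂ) : (z - c) * dslope g c z = g z := sub_smul_dslope_of_zero hgc z
  have dslope_ne_zero (z : ℂ) (hz : z ∈ closedBall 0 R) : dslope g c z ≠ 0 := by
    intro h0
    obtain rfl : z = c := hzero z hz (by rw [← factor z, h0, mul_zero])
    exact hg' (dslope_same g z ▸ h0)
  have quotient_analytic : AnalyticOnNhd ℂ (fun z ↦ m z / dslope g c z) (closedBall 0 R) :=
    fun z hz ↦ (hm z hz).div (analyticAt_dslope (hg z hz)) (dslope_ne_zero z hz)
  have quotient_eq : (fun z ↦ m z / dslope g c z / (z - c)) = fun z ↦ m z / g z :=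
    funext fun z ↦ by rw [← factor z, div_div, mul_comm]
  simpa only [quotient_eq, dslope_same] using
    exists_norm_iteratedDeriv_div_sub_add_le hR hc quotient_analytic

end SimplePole

lemma eq_ofReal_of_cexp_eq_of_norm_lt {a : ℝ} {z : ℂ} (hexp : Complex.exp z = Complex.exp a)
    (hz : ‖z‖ < ‖(a : ℂ) + 2 * π * Complex.I‖) : z = a := by
  obtain ⟨n, rfl⟩ := Complex.exp_eq_exp_iff_exists_int.1 hexp
  have norm_sq_eq (y : ℝ) : ‖(a : ℂ) + y * Complex.I‖ ^ 2 = a ^ 2 + y ^ 2 := by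
    rw [Complex.sq_norm, Complex.normSq_add_mul_I]
  have hn : n = 0 := by
    by_contra hn
    have one_le_sq : (1 : ℝ) ≤ (n : ℝ) ^ 2 := mod_cast (by positivity : 0 < n ^ 2)
    have norm_le : ‖(a : ℂ) + 2 * π * Complex.I‖ ≤ ‖(a : ℂ) + n * (2 * π * Complex.I)‖ := by
      have norm_sq_le : ‖(a : ℂ) + 2 * π * Complex.I‖ ^ 2 ≤
          ‖(a : ℂ) + n * (2 * π * Complex.I)‖ ^ 2 := by
        have left_sq := norm_sq_eq (2 * π)
        have right_sq := norm_sq_eq (n * (2 * π))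
        push_cast at left_sq right_sq
        rw [← mul_assoc, left_sq, right_sq]
        nlinarith [sq_nonneg (2 * π)]
      exact le_of_sq_le_sq norm_sq_le (norm_nonneg _)
    exact hz.not_ge norm_le
  simp [hn]

lemma exists_norm_iteratedDeriv_div_exp_sub_exp_le {m : ℂ → ℂ} {a R : ℝ} (hR0 : 0 < R)
    (ha : a ≠ 0) (hR : R < ‖(a : ℂ) + 2 * π * Complex.I‖)
    (hm : AnalyticOnNhd ℂ m (Metric.closedBall 0 R)) :
    ∃ C : ℝ, 0 < C ∧ ∀ L : ℕ,
      ‖iteratedDeriv L (fun z ↦ m z / (Complex.exp a - Complex.exp z)) 0 -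
        m a / Complex.exp a * (L.factorial / a ^ (L + 1))‖ ≤ L.factorial * C / R ^ L := by
  have deriv_eq : deriv (fun z ↦ Complex.exp a - Complex.exp z) a = -Complex.exp a := by
    rw [deriv_const_sub, Complex.deriv_exp]
  have zero_of_denominator : ∀ z ∈ Metric.closedBall (0 : ℂ) R,
      Complex.exp a - Complex.exp z = 0 → z = a := fun z hz hz0 ↦
    eq_ofReal_of_cexp_eq_of_norm_lt (sub_eq_zero.1 hz0).symm
      ((mem_closedBall_zero_iff.1 hz).trans_lt hR)
  obtain ⟨C, hC, hbound⟩ := exists_norm_iteratedDeriv_div_add_le_of_simple_zero hR0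
    (Complex.ofReal_ne_zero.2 ha) hm (fun z _ ↦ by fun_prop) (sub_self (Complex.exp a))
    (by simp [deriv_eq]) zero_of_denominator
  refine ⟨C, hC, fun L ↦ ?_⟩
  simpa only [deriv_eq, div_neg, neg_mul, ← sub_eq_add_neg] using hbound L

lemma lt_norm_log_two_add : 6.3 < ‖(log 2 : ℂ) + 2 * π * Complex.I‖ := by
  have norm_sq_eq : ‖(log 2 : ℂ) + 2 * π * Complex.I‖ ^ 2 = log 2 ^ 2 + (2 * π) ^ 2 := by
    rw [Complex.sq_norm, ← Complex.normSq_add_mul_I]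
    push_cast
    rfl
  refine lt_of_pow_lt_pow_left₀ 2 (norm_nonneg _) ?_
  rw [norm_sq_eq]
  nlinarith [log_two_gt_d9, pi_gt_d4]

namespace IsCWStationary

variable {μ : Measure ℝ}

lemma complexMGF_eventuallyEq_div [IsFiniteMeasure μ] (hμ : IsCWStationary μ) :
    complexMGF id μ =ᶠ[𝓝 0]
      fun z ↦ complexMGF (fun x ↦ x / (x + 1)) μ z / (2 - Complex.exp z) := by
  have re_lt : ∀ᶠ z : ℂ in 𝓝 0, z.re < log 2 :=
    Complex.continuous_re.continuousAt.eventually_lt_const (log_pos one_lt_two)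
  have ne_zero : ∀ᶠ z : ℂ in 𝓝 0, 2 - Complex.exp z ≠ 0 :=
    ContinuousAt.eventually_ne (by fun_prop) (by norm_num)
  filter_upwards [re_lt, ne_zero] with z hz hz'
  rw [eq_div_iff hz', hμ.complexMGF_mul_two_sub_exp hz]

lemma exists_abs_moment_sub_le [IsFiniteMeasure μ] (hμ : IsCWStationary μ) {R : ℝ} (hR0 : 0 < R)
    (hR : R < ‖(log 2 : ℂ) + 2 * π * Complex.I‖) :
    ∃ C : ℝ, 0 < C ∧ ∀ L : ℕ,
      |(∫ x, x ^ L ∂μ) - 1 / (2 * log 2) * mgf (fun x ↦ x / (x + 1)) μ (log 2) *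
        log 2 ^ (-(L : ℤ)) * L.factorial| ≤ C * R ^ (-(L : ℤ)) * L.factorial := by
  have exp_log_two : Complex.exp (log 2 : ℝ) = 2 := by
    rw [← Complex.ofReal_exp, exp_log two_pos, Complex.ofReal_ofNat]
  obtain ⟨C, hC, hbound⟩ := exists_norm_iteratedDeriv_div_exp_sub_exp_le hR0
    (log_pos one_lt_two).ne' hR
    (fun z _ ↦ (differentiable_complexMGF hμ.integrableExpSet_div_add_one).analyticAt z)
  refine ⟨C, hC, fun L ↦ ?_⟩
  have bound := hbound L
  rw [exp_log_two, ← hμ.complexMGF_eventuallyEq_div.iteratedDeriv_eq,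
    iteratedDeriv_complexMGF_zero hμ.zero_mem_interior_integrableExpSet, complexMGF_ofReal] at bound
  have main_term : 1 / (2 * log 2) * mgf (fun x ↦ x / (x + 1)) μ (log 2) * log 2 ^ (-(L : ℤ)) *
      L.factorial = mgf (fun x ↦ x / (x + 1)) μ (log 2) / 2 * (L.factorial / log 2 ^ (L + 1)) := by
    rw [zpow_neg, zpow_natCast]
    field
  have error_term : C * R ^ (-(L : ℤ)) * L.factorial = L.factorial * C / R ^ L := by
    rw [zpow_neg, zpow_natCast]
    field
  rw [main_term, error_term]
  simpa only [← Complex.norm_real, ← Real.norm_eq_abs, id] using mod_cast bound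

end IsCWStationary

theorem calkin_wilf_moments_asymptotics_general {F : ℝ → ℝ}
    (hF : ∀ x : ℝ, 0 ≤ x → Tendsto (fun n ↦ Fcw n x) atTop (𝓝 (F x)))
    {μ : Measure ℝ} [IsProbabilityMeasure μ]
    (hμ : ∀ a b : ℝ, a ≤ b → μ (Ioc a b) = ENNReal.ofReal (F b - F a))
    {R : ℝ} (hR0 : 0 < R) (hR : R < ‖(log 2 : ℂ) + 2 * π * Complex.I‖) {A : ℝ}
    (hA : A = 1 / (2 * log 2) *
      ∑' k : ℕ, (∫ x, (x / (x + 1)) ^ k ∂μ) * (log 2) ^ k / (k.factorial : ℝ)) :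
    ∃ C : ℝ, 0 < C ∧ ∀ L : ℕ,
      |(∫ x, x ^ L ∂μ) - A * (log 2) ^ (-(L : ℤ)) * (L.factorial : ℝ)| ≤
        C * R ^ (-(L : ℤ)) * (L.factorial : ℝ) := by
  have hstat : IsCWStationary μ := (isCWLimitLaw_of_measure_Ioc hF hμ).isCWStationary
  rw [hA, (hasSum_mgf hstat.integrableExpSet_div_add_one (log 2)).tsum_eq]
  exact hstat.exists_abs_moment_sub_le hR0 hR

/-- Let `F` be the limit distribution function of the Calkin–Wilf tree and `μ`
its Lebesgue–Stieltjes (probability) measure, so that `μ(a,b] = F(b) − F(a)`.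
With `M_L = ∫ x^L dμ`, `m_k = ∫ (x/(x+1))^k dμ` and
`A = (1/(2·log 2))·∑_{k=0}^∞ m_k (log 2)^k / k!`, there is a constant `C > 0`
such that `|M_L − A·(log 2)^(−L)·L!| ≤ C·6.3^(−L)·L!` for every `L ≥ 0`;
in particular `M_L ~ A·(log 2)^(−L)·L!` as `L → ∞`. -/
theorem calkin_wilf_moments_asymptotics (F : ℝ → ℝ)
    (hF : ∀ x : ℝ, 0 ≤ x → Tendsto (fun n => Fcw n x) atTop (nhds (F x)))
    (μ : Measure ℝ) (hprob : IsProbabilityMeasure μ)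
    (hμ : ∀ a b : ℝ, a ≤ b → μ (Set.Ioc a b) = ENNReal.ofReal (F b - F a))
    (A : ℝ)
    (hA : A = 1 / (2 * Real.log 2) *
      ∑' k : ℕ, (∫ x, (x / (x + 1)) ^ k ∂μ) * (Real.log 2) ^ k / (k.factorial : ℝ)) :
    ∃ C : ℝ, 0 < C ∧ ∀ L : ℕ,
      |(∫ x, x ^ L ∂μ) - A * (Real.log 2) ^ (-(L : ℤ)) * (L.factorial : ℝ)| ≤
        C * (6.3 : ℝ) ^ (-(L : ℤ)) * (L.factorial : ℝ) :=
  calkin_wilf_moments_asymptotics_general hF hμ (by norm_num) lt_norm_log_two_add hA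
end

section
/- Let p be a prime and z ∈ ℤ_p a p-adic integer. Then the proportion of entries of the n-th generation of the Calkin–Wilf tree lying in the ball { u ∈ ℚ_p : ord_p(u − z) ≥ 1 } converges: lim_{n→∞} F_n(z,1) = 1/(p+1). -/
open Filter

open scoped Classical in
/-- `FcwP p ν z (n-1) = F_n(z,ν) = 2^(1-n) · #{j : ord_p(x_j^(n) − z) ≥ ν}` is
the proportion of entries of the `n`-th generation of the Calkin–Wilf tree
(viewed in `ℚ_p`) lying in the ball `{u : ord_p(u − z) ≥ ν}`, the latter
condition being expressed via the `p`-adic norm as `‖u − z‖_p ≤ p^(−ν)`. -/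
noncomputable def FcwP (p : ℕ) [Fact p.Prime] (ν : ℤ) (z : ℚ_[p]) (n : ℕ) : ℝ :=
  ((CW n).countP (fun q => decide (‖(q : ℚ_[p]) - z‖ ≤ (p : ℝ) ^ (-ν)))) / 2 ^ n

/-!
Reduction modulo `p` maps `ℙ¹(ℚ_p)` to the finite projective line `ℙ¹(𝔽_p)` and is equivariant for
`SL₂(ℤ)`.  The two children `x / (x + 1)` and `x + 1` of `x` are its images under
`[[1, 0], [1, 1]]` and `[[1, 1], [0, 1]]`, so the reductions of the `n`-th generation are
distributed as the `n`-th step of a random walk on the `p + 1` points of `ℙ¹(𝔽_p)` driven by two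
permutations.  Each step of such a walk decreases the `ℓ²` norm of the distribution by a variance;
these variances tend to zero, so in the limit the mass is transported unchanged along either
permutation.  Hence the masses of `σᵢ s` and `σⱼ t` are asymptotically equal whenever those of `s`
and `t` are, and on `ℙ¹(𝔽_p)` this identifies all points.
-/

namespace CalkinWilf

open scoped Topology OnePoint MatrixGroups
open Matrix.SpecialLinearGroup (mapGL toGL isCoprime_col)

section RandomWalk

variable {α ι : Type*} [Fintype ι]

/-- One step of the random walk on `α` that applies the permutation `σ i` with probability `w i`,
acting on mass distributions: the mass at `s` after the step comes from the points
`(σ i).symm s`. -/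
def walkStep (w : ι → ℝ) (σ : ι → Equiv.Perm α) (μ : α → ℝ) (s : α) : ℝ :=
  ∑ i, w i * μ ((σ i).symm s)

/-- Two points are asymptotically equal for a sequence of functions `f n` if the difference of the
values of `f n` at them tends to zero. -/
def asymptoticSetoid (f : ℕ → α → ℝ) : Setoid α where
  r s t := Tendsto (fun n => f n s - f n t) atTop (𝓝 0)
  iseqv :=
    { refl := fun s => by simp
      symm := fun h => by simpa using h.neg
      trans := fun h h' => by simpa using h.add h' }

variable {w : ι → ℝ} {σ : ι → Equiv.Perm α}

lemma sum_walkStep [Fintype α] (hw : ∑ i, w i = 1) (μ : α → ℝ) :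
    ∑ s, walkStep w σ μ s = ∑ s, μ s := by
  simp only [walkStep]
  rw [Finset.sum_comm]
  simp_rw [← Finset.mul_sum, Equiv.sum_comp (σ _).symm μ, ← Finset.sum_mul, hw, one_mul]

lemma sum_weight_mul_sub_sq (hw : ∑ i, w i = 1) (x : ι → ℝ) :
    ∑ i, w i * (x i - ∑ j, w j * x j) ^ 2 = ∑ i, w i * x i ^ 2 - (∑ i, w i * x i) ^ 2 := by
  set m := ∑ j, w j * x j with hm
  calc ∑ i, w i * (x i - m) ^ 2
      = ∑ i, (w i * x i ^ 2 - 2 * m * (w i * x i) + m ^ 2 * w i) :=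
        Finset.sum_congr rfl fun i _ => by ring
    _ = ∑ i, w i * x i ^ 2 - m ^ 2 := by
        rw [Finset.sum_add_distrib, Finset.sum_sub_distrib, ← Finset.mul_sum, ← Finset.mul_sum,
          hw, ← hm]
        ring

lemma sum_sq_sub_sum_walkStep_sq [Fintype α] (hw : ∑ i, w i = 1) (μ : α → ℝ) :
    ∑ s, μ s ^ 2 - ∑ s, walkStep w σ μ s ^ 2 =
      ∑ i, w i * ∑ s, (μ s - walkStep w σ μ (σ i s)) ^ 2 := by
  have mass_eq : ∑ s, μ s ^ 2 = ∑ s, ∑ i, w i * μ ((σ i).symm s) ^ 2 := by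
    rw [Finset.sum_comm]
    simp_rw [← Finset.mul_sum, Equiv.sum_comp (σ _).symm fun s => μ s ^ 2, ← Finset.sum_mul, hw,
      one_mul]
  have reindex (i : ι) : ∑ s, (μ s - walkStep w σ μ (σ i s)) ^ 2 =
      ∑ s, (μ ((σ i).symm s) - walkStep w σ μ s) ^ 2 := by
    simpa only [Equiv.symm_apply_apply] using
      Equiv.sum_comp (σ i) fun s => (μ ((σ i).symm s) - walkStep w σ μ s) ^ 2
  simp_rw [reindex, Finset.mul_sum]
  rw [mass_eq, Finset.sum_comm (γ := ι), ← Finset.sum_sub_distrib]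
  exact Finset.sum_congr rfl fun s _ => (sum_weight_mul_sub_sq hw _).symm

variable {f : ℕ → α → ℝ}

lemma tendsto_sub_walkStep_apply [Finite α] (hw_pos : ∀ i, 0 < w i) (hw : ∑ i, w i = 1)
    (hf : ∀ n, f (n + 1) = walkStep w σ (f n)) (i : ι) (s : α) :
    Tendsto (fun n => f n s - f (n + 1) (σ i s)) atTop (𝓝 0) := by
  cases nonempty_fintype α
  set E : ℕ → ℝ := fun n => ∑ s, f n s ^ 2 with hE
  have energy_drop (n : ℕ) :
      E n - E (n + 1) = ∑ j, w j * ∑ t, (f n t - f (n + 1) (σ j t)) ^ 2 := by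
    simp only [hE, hf, sum_sq_sub_sum_walkStep_sq hw]
  have term_nonneg (n : ℕ) (j : ι) : 0 ≤ w j * ∑ t, (f n t - f (n + 1) (σ j t)) ^ 2 :=
    mul_nonneg (hw_pos j).le (Finset.sum_nonneg fun _ _ => sq_nonneg _)
  have E_antitone : Antitone E := antitone_nat_of_succ_le fun n =>
    sub_nonneg.1 <| energy_drop n ▸ Finset.sum_nonneg fun j _ => term_nonneg n j
  have E_bddBelow : BddBelow (Set.range E) :=
    ⟨0, Set.forall_mem_range.2 fun n => Finset.sum_nonneg fun _ _ => sq_nonneg _⟩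
  have drop_tendsto : Tendsto (fun n => (E n - E (n + 1)) / w i) atTop (𝓝 0) := by
    have hlim := tendsto_atTop_ciInf E_antitone E_bddBelow
    simpa using (hlim.sub (hlim.comp (tendsto_add_atTop_nat 1))).div_const (w i)
  have sq_le (n : ℕ) : (f n s - f (n + 1) (σ i s)) ^ 2 ≤ (E n - E (n + 1)) / w i := by
    rw [le_div_iff₀' (hw_pos i), energy_drop]
    calc w i * (f n s - f (n + 1) (σ i s)) ^ 2
        ≤ w i * ∑ t, (f n t - f (n + 1) (σ i t)) ^ 2 :=
          mul_le_mul_of_nonneg_left (Finset.single_le_sum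
            (f := fun t => (f n t - f (n + 1) (σ i t)) ^ 2)
            (fun _ _ => sq_nonneg _) (Finset.mem_univ s)) (hw_pos i).le
      _ ≤ ∑ j, w j * ∑ t, (f n t - f (n + 1) (σ j t)) ^ 2 :=
          Finset.single_le_sum (fun j _ => term_nonneg n j) (Finset.mem_univ i)
  have sq_tendsto : Tendsto (fun n => (f n s - f (n + 1) (σ i s)) ^ 2) atTop (𝓝 0) :=
    squeeze_zero (fun _ => sq_nonneg _) sq_le drop_tendsto
  rw [tendsto_zero_iff_abs_tendsto_zero]
  simpa only [Function.comp_def, Real.sqrt_sq_eq_abs, Real.sqrt_zero] using sq_tendsto.sqrt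

theorem tendsto_of_walkStep [Fintype α] (hw_pos : ∀ i, 0 < w i) (hw : ∑ i, w i = 1)
    (hf : ∀ n, f (n + 1) = walkStep w σ (f n))
    (hσ : ∀ r : Setoid α, (∀ i j {s t}, r s t → r (σ i s) (σ j t)) → r = ⊤) (s : α) :
    Tendsto (fun n => f n s) atTop (𝓝 ((∑ t, f 0 t) / Fintype.card α)) := by
  have setoid_eq_top : asymptoticSetoid f = ⊤ := by
    refine hσ _ fun i j s t hst => (tendsto_add_atTop_iff_nat 1).1 ?_
    simpa using (hst.add (tendsto_sub_walkStep_apply hw_pos hw hf j t)).sub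
      (tendsto_sub_walkStep_apply hw_pos hw hf i s)
  have sub_tendsto (t : α) : Tendsto (fun n => f n s - f n t) atTop (𝓝 0) :=
    (setoid_eq_top ▸ trivial : asymptoticSetoid f s t)
  have mass_eq (n : ℕ) : ∑ t, f n t = ∑ t, f 0 t := by
    induction n with
    | zero => rfl
    | succ n ih => rw [hf, sum_walkStep hw, ih]
  have card_ne_zero : (Fintype.card α : ℝ) ≠ 0 :=
    Nat.cast_ne_zero.2 (Fintype.card_pos_iff.2 ⟨s⟩).ne'
  have value_eq (n : ℕ) :
      (∑ t, (f n s - f n t) + ∑ t, f 0 t) / Fintype.card α = f n s := by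
    rw [Finset.sum_sub_distrib, mass_eq, Finset.sum_const, Finset.card_univ, nsmul_eq_mul,
      sub_add_cancel, mul_div_cancel_left₀ _ card_ne_zero]
  have sum_tendsto : Tendsto (fun n => ∑ t, (f n s - f n t)) atTop (𝓝 0) := by
    simpa using tendsto_finsetSum Finset.univ fun t _ => sub_tendsto t
  simpa only [value_eq, zero_add] using
    (sum_tendsto.add_const (∑ t, f 0 t)).div_const (Fintype.card α : ℝ)

end RandomWalk

section Reduction

variable {R K L : Type*} [CommRing R] [Field K] [Algebra R K] [Field L]

open scoped Classical in
/-- The reduction map `ℙ¹(K) → ℙ¹(L)` induced by a ring homomorphism `φ : R → L`, where `K` is the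
fraction field of `R`.  All points outside `R` are sent to `∞`, which is the right convention when
`R` is a valuation ring and `φ` is a local homomorphism. -/
noncomputable def projReduction (φ : R →+* L) (x : OnePoint K) : OnePoint L :=
  if h : ∃ r : R, x = ↑(algebraMap R K r) then ↑(φ h.choose) else ∞

lemma projReduction_eq_infty {φ : R →+* L} {x : OnePoint K}
    (hx : ∀ r : R, x ≠ ↑(algebraMap R K r)) : projReduction φ x = ∞ :=
  dif_neg (not_exists.2 hx)

variable [IsFractionRing R K]

lemma projReduction_coe_algebraMap (φ : R →+* L) (r : R) :
    projReduction φ (algebraMap R K r : OnePoint K) = φ r := by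
  have h : ∃ r' : R, (algebraMap R K r : OnePoint K) = ↑(algebraMap R K r') := ⟨r, rfl⟩
  rw [projReduction, dif_pos h,
    ← IsFractionRing.injective R K (OnePoint.coe_injective h.choose_spec)]

lemma projReduction_eq_coe_iff {φ : R →+* L} {x : OnePoint K} {c : L} :
    projReduction φ x = ↑c ↔ ∃ r : R, φ r = c ∧ x = ↑(algebraMap R K r) := by
  constructor
  · intro hx
    obtain ⟨r, rfl⟩ : ∃ r : R, x = ↑(algebraMap R K r) := by
      by_contra! h
      exact OnePoint.infty_ne_coe c ((projReduction_eq_infty (φ := φ) h).symm.trans hx)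
    exact ⟨r, OnePoint.coe_injective ((projReduction_coe_algebraMap φ r).symm.trans hx), rfl⟩
  · rintro ⟨r, rfl, rfl⟩
    exact projReduction_coe_algebraMap φ r

variable [DecidableEq K] [DecidableEq L] (φ : R →+* L) [IsLocalHom φ]

lemma projReduction_smul_infty (γ : SL(2, R)) :
    projReduction φ (mapGL K γ • (∞ : OnePoint K)) = toGL (γ.map φ) • (∞ : OnePoint L) := by
  have smul_infty_K : mapGL K γ • (∞ : OnePoint K) =
      if algebraMap R K (γ 1 0) = 0 then ∞
      else ↑(algebraMap R K (γ 0 0) / algebraMap R K (γ 1 0)) :=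
    OnePoint.smul_infty_eq_ite _
  have smul_infty_L : toGL (γ.map φ) • (∞ : OnePoint L) =
      if φ (γ 1 0) = 0 then ∞ else ↑(φ (γ 0 0) / φ (γ 1 0)) :=
    OnePoint.smul_infty_eq_ite _
  rw [smul_infty_K, smul_infty_L]
  by_cases hφ : φ (γ 1 0) = 0
  · rw [if_pos hφ]
    refine projReduction_eq_infty fun r hr => ?_
    split_ifs at hr with hK
    · exact OnePoint.infty_ne_coe _ hr
    · have dvd : γ 1 0 ∣ γ 0 0 := by
        refine ⟨r, IsFractionRing.injective R K ?_⟩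
        rw [map_mul, ← OnePoint.coe_injective hr, mul_div_cancel₀ _ hK]
      have isUnit : IsUnit (γ 1 0) := (isCoprime_col γ 0).isUnit_of_dvd' dvd dvd_rfl
      exact (isUnit.map φ).ne_zero hφ
  · obtain ⟨u, hu⟩ : IsUnit (γ 1 0) := isUnit_of_map_unit φ _ (isUnit_iff_ne_zero.2 hφ)
    have hK : algebraMap R K (γ 1 0) ≠ 0 := (hu ▸ u.isUnit.map (algebraMap R K)).ne_zero
    rw [if_neg hφ, if_neg hK, projReduction_eq_coe_iff]
    refine ⟨γ 0 0 * ↑u⁻¹, ?_, congrArg _ ?_⟩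
    · rw [eq_div_iff hφ, ← map_mul, ← hu, Units.inv_mul_cancel_right]
    · rw [div_eq_iff hK, ← map_mul, ← hu, Units.inv_mul_cancel_right]

variable [IsDomain R] [IsPrincipalIdealRing R]

lemma projReduction_smul (γ : SL(2, R)) (x : OnePoint K) :
    projReduction φ (mapGL K γ • x) = toGL (γ.map φ) • projReduction φ x := by
  obtain ⟨δ, rfl⟩ := OnePoint.exists_mem_SL2 R x
  rw [← mul_smul, ← map_mul, projReduction_smul_infty, projReduction_smul_infty, map_mul, map_mul,
    mul_smul]

lemma projReduction_smul_int (γ : SL(2, ℤ)) (x : OnePoint K) :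
    projReduction φ ((mapGL K γ : GL (Fin 2) K) • x) =
      (mapGL L γ : GL (Fin 2) L) • projReduction φ x := by
  have hK : mapGL K γ = mapGL K (γ.map (Int.castRingHom R)) := by ext; simp
  have hL : mapGL L γ = toGL ((γ.map (Int.castRingHom R)).map φ) := by ext; simp
  rw [hK, hL, projReduction_smul]

end Reduction

section Tree

/-- The integral Möbius transformations `x ↦ x / (x + 1)` and `x ↦ x + 1` that map an entry of the
Calkin–Wilf tree to its two children. -/
def childMoebius : Fin 2 → SL(2, ℤ) := ![ModularGroup.T.transpose, ModularGroup.T]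

variable {K : Type*} [Field K] [DecidableEq K]

lemma childMoebius_zero_smul_coe {x : K} (hx : x + 1 ≠ 0) :
    (mapGL K (childMoebius 0) : GL (Fin 2) K) • (x : OnePoint K) = ↑(x / (x + 1)) := by
  simp [childMoebius, OnePoint.smul_some_eq_ite, hx]

lemma childMoebius_one_smul_coe (x : K) :
    (mapGL K (childMoebius 1) : GL (Fin 2) K) • (x : OnePoint K) = ↑(x + 1) := by
  simp [childMoebius, OnePoint.smul_some_eq_ite]

lemma childMoebius_zero_smul_infty :
    (mapGL K (childMoebius 0) : GL (Fin 2) K) • (∞ : OnePoint K) = ↑(1 : K) := by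
  simp [childMoebius, OnePoint.smul_infty_eq_ite]

lemma childMoebius_one_smul_infty :
    (mapGL K (childMoebius 1) : GL (Fin 2) K) • (∞ : OnePoint K) = ∞ := by
  simp [childMoebius, OnePoint.smul_infty_eq_ite]

lemma CW_pos {n : ℕ} {q : ℚ} (hq : q ∈ CW n) : 0 < q := by
  induction n generalizing q with
  | zero => simp_all [CW]
  | succ n ih =>
    obtain ⟨x, hx, hqx⟩ := List.mem_flatMap.1 hq
    have x_pos := ih hx
    rcases List.mem_pair.1 hqx with rfl | rfl <;> positivity

lemma countP_flatMap_pair {α β : Type*} [DecidableEq α] {F : β → α} {a b : β → β}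
    {σ τ : Equiv.Perm α} {l : List β} (ha : ∀ x ∈ l, F (a x) = σ (F x))
    (hb : ∀ x ∈ l, F (b x) = τ (F x)) (s : α) :
    (l.flatMap fun x => [a x, b x]).countP (F · = s) =
      l.countP (F · = σ.symm s) + l.countP (F · = τ.symm s) := by
  induction l with
  | nil => rfl
  | cons x l ih =>
    rw [List.forall_mem_cons] at ha hb
    simp only [List.flatMap_cons, List.countP_append, ih ha.2 hb.2, List.countP_cons,
      List.countP_nil, ha.1, hb.1, Equiv.eq_symm_apply]
    ring

variable (p : ℕ) [Fact p.Prime]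

instance isLocalHom_toZMod : IsLocalHom (PadicInt.toZMod (p := p)) :=
  .of_surjective _ (ZMod.ringHom_surjective _)

/-- The reduction modulo `p` of a rational number, as a point of the projective line over `𝔽_p`. -/
noncomputable def ratReduction (q : ℚ) : OnePoint (ZMod p) :=
  projReduction PadicInt.toZMod ((q : ℚ_[p]) : OnePoint ℚ_[p])

/-- The permutation of the projective line over `𝔽_p` induced by `childMoebius`. -/
def childPerm (i : Fin 2) : Equiv.Perm (OnePoint (ZMod p)) :=
  MulAction.toPerm (mapGL (ZMod p) (childMoebius i))

lemma ratReduction_div_add_one {q : ℚ} (hq : q + 1 ≠ 0) :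
    ratReduction p (q / (q + 1)) = childPerm p 0 (ratReduction p q) := by
  classical
  have hq' : (q : ℚ_[p]) + 1 ≠ 0 := mod_cast hq
  simp only [ratReduction, childPerm, MulAction.toPerm_apply, ← projReduction_smul_int,
    childMoebius_zero_smul_coe hq', Rat.cast_div, Rat.cast_add, Rat.cast_one]

lemma ratReduction_add_one (q : ℚ) :
    ratReduction p (q + 1) = childPerm p 1 (ratReduction p q) := by
  classical
  simp only [ratReduction, childPerm, MulAction.toPerm_apply, ← projReduction_smul_int,
    childMoebius_one_smul_coe, Rat.cast_add, Rat.cast_one]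

lemma norm_sub_le_inv_iff_ratReduction_eq (q : ℚ) (z : ℤ_[p]) :
    ‖(q : ℚ_[p]) - z‖ ≤ (p : ℝ) ^ (-1 : ℤ) ↔ ratReduction p q = ↑(PadicInt.toZMod z) := by
  have ker_iff (x : ℤ_[p]) : PadicInt.toZMod x = 0 ↔ ‖x‖ < 1 := by
    rw [← RingHom.mem_ker, PadicInt.ker_toZMod, IsLocalRing.mem_maximalIdeal, PadicInt.mem_nonunits]
  rw [Padic.norm_le_pow_iff_norm_lt_pow_add_one, neg_add_cancel, zpow_zero, ratReduction,
    projReduction_eq_coe_iff]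
  constructor
  · intro h
    let d : ℤ_[p] := ⟨q - z, h.le⟩
    refine ⟨z + d, ?_, ?_⟩
    · rw [map_add, (ker_iff d).2 h, add_zero]
    · exact congrArg _ (add_sub_cancel _ _).symm
  · rintro ⟨r, hr, hqr⟩
    rw [OnePoint.coe_injective hqr]
    exact (ker_iff (r - z)).1 (by rw [map_sub, hr, sub_self])

lemma setoid_eq_top_of_childPerm (r : Setoid (OnePoint (ZMod p)))
    (hr : ∀ i j {s t}, r s t → r (childPerm p i s) (childPerm p j t)) : r = ⊤ := by
  have zero_fixed : childPerm p 0 ↑(0 : ZMod p) = ↑(0 : ZMod p) := by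
    exact (childMoebius_zero_smul_coe (by simp)).trans (by rw [zero_div])
  have childPerm_one_coe (x : ZMod p) : childPerm p 1 x = ↑(x + 1) := childMoebius_one_smul_coe x
  have one_zero : r ↑(1 : ZMod p) ↑(0 : ZMod p) := by
    simpa [zero_fixed, childPerm_one_coe] using hr 1 0 (r.refl ↑(0 : ZMod p))
  have natCast_zero (k : ℕ) : r ↑(k : ZMod p) ↑(0 : ZMod p) := by
    induction k with
    | zero => simp
    | succ k ih =>
      have succ_one : r ↑((k + 1 : ℕ) : ZMod p) ↑(1 : ZMod p) := by
        simpa [childPerm_one_coe] using hr 1 1 ih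
      exact r.trans succ_one one_zero
  have infty_one : r ∞ ↑(1 : ZMod p) := by
    have h := hr 1 0 (r.refl ∞)
    rwa [show childPerm p 1 ∞ = ∞ from childMoebius_one_smul_infty,
      show childPerm p 0 ∞ = ↑(1 : ZMod p) from childMoebius_zero_smul_infty] at h
  have all_zero (s : OnePoint (ZMod p)) : r s ↑(0 : ZMod p) := by
    induction s using OnePoint.rec with
    | infty => exact r.trans infty_one one_zero
    | coe x => simpa using natCast_zero x.val
  exact Setoid.eq_top_iff.2 fun s t => r.trans (all_zero s) (r.symm (all_zero t))

open scoped Classical in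
/-- The proportion of entries of `CW n` with reduction `s` modulo `p`. -/
noncomputable def reductionFreq (n : ℕ) (s : OnePoint (ZMod p)) : ℝ :=
  (CW n).countP (ratReduction p · = s) / 2 ^ n

lemma FcwP_one_eq_reductionFreq (z : ℤ_[p]) (n : ℕ) :
    FcwP p 1 z n = reductionFreq p n ↑(PadicInt.toZMod z) := by
  rw [FcwP, reductionFreq, bind_pure_comp, List.map_eq_map, List.countP_map]
  congr 2
  refine List.countP_congr fun q _ => ?_
  simpa only [Function.comp_apply, decide_eq_true_eq] using
    norm_sub_le_inv_iff_ratReduction_eq p q z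

lemma sum_reductionFreq_zero : ∑ s, reductionFreq p 0 s = 1 := by
  classical
  have freq_eq (s : OnePoint (ZMod p)) :
      reductionFreq p 0 s = if ratReduction p 1 = s then 1 else 0 := by
    simp [reductionFreq, CW, List.countP_cons]
  simp only [freq_eq, Finset.sum_ite_eq, Finset.mem_univ, if_true]

lemma reductionFreq_succ (n : ℕ) :
    reductionFreq p (n + 1) = walkStep (fun _ => 1 / 2) (childPerm p) (reductionFreq p n) := by
  classical
  funext s
  rw [reductionFreq, CW, countP_flatMap_pair
    (fun q hq => ratReduction_div_add_one p (add_pos (CW_pos hq) one_pos).ne')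
    (fun q _ => ratReduction_add_one p q), walkStep, Fin.sum_univ_two, reductionFreq, reductionFreq]
  push_cast
  ring

theorem tendsto_reductionFreq (s : OnePoint (ZMod p)) :
    Tendsto (fun n => reductionFreq p n s) atTop (𝓝 (1 / ((p : ℝ) + 1))) := by
  have card_eq : Fintype.card (OnePoint (ZMod p)) = p + 1 :=
    Fintype.card_option.trans (congrArg (· + 1) (ZMod.card p))
  have h := tendsto_of_walkStep (by norm_num) (by norm_num) (reductionFreq_succ p)
    (setoid_eq_top_of_childPerm p) s
  rwa [sum_reductionFreq_zero, card_eq, Nat.cast_add_one] at h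

end Tree

end CalkinWilf

/-- For a prime `p` and a `p`-adic integer `z`, the proportion of entries of
the `n`-th generation of the Calkin–Wilf tree lying in the ball
`{u ∈ ℚ_p : ord_p(u − z) ≥ 1}` converges to `1/(p+1)` as `n → ∞`. -/
theorem calkin_wilf_padic_ball_limit (p : ℕ) [Fact p.Prime] (z : ℤ_[p]) :
    Tendsto (FcwP p 1 (z : ℚ_[p])) atTop (nhds (1 / ((p : ℝ) + 1))) := by
  simpa only [← CalkinWilf.FcwP_one_eq_reductionFreq] using!
    CalkinWilf.tendsto_reductionFreq p (PadicInt.toZMod z)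
end
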